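/- arXiv:0708.1595 — 4 statements merged into one kernel-verified Lean document; each statement's English description precedes it below -/
import Mathlib

section
/- Let X₁ = u₁∧v₁ and X₂ = u₂∧v₂ be simple bivectors on ℝ⁴ such that each pair u_i, v_i is linearly independent. Then there exists a nonzero vector n ∈ ℝ⁴ with X̃₁ n = 0 and X̃₂ n = 0 (where X̃_i denotes the Hodge dual of X_i) if and only if the linear span of {u₁, v₁, u₂, v₂} in ℝ⁴ has dimension at most 3. -/
open Matrix BigOperators

noncomputable section

/-- The bivector (antisymmetric matrix) `u ∧ v = u vᵀ − v uᵀ` on `ℝ⁴`. -/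
def wedge (u v : Fin 4 → ℝ) : Matrix (Fin 4) (Fin 4) ℝ :=
  Matrix.of fun i j => u i * v j - v i * u j

/-- The Levi-Civita symbol `ε^{IJKL}` on `Fin 4`, with `ε^{0123} = 1`. -/
def lc (i j k l : Fin 4) : ℝ :=
  ((((j : ℤ) - i) * ((k : ℤ) - i) * ((l : ℤ) - i) * ((k : ℤ) - j) * ((l : ℤ) - j) *
      ((l : ℤ) - k) : ℤ) : ℝ) / 12

/-- The Hodge dual of a bivector: `X̃^{IJ} = (1/2) Σ_{K,L} ε^{IJKL} X^{KL}`. -/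
def hodge (X : Matrix (Fin 4) (Fin 4) ℝ) : Matrix (Fin 4) (Fin 4) ℝ :=
  Matrix.of fun i j => (1 / 2) * ∑ k, ∑ l, lc i j k l * X k l

theorem hodge_mulVec_eq (u v n : Fin 4 → ℝ) :
    (hodge (wedge u v)).mulVec n = ![
      n 1 * (u 2 * v 3 - v 2 * u 3) - n 2 * (u 1 * v 3 - v 1 * u 3) + n 3 * (u 1 * v 2 - v 1 * u 2),
      -(n 0 * (u 2 * v 3 - v 2 * u 3) - n 2 * (u 0 * v 3 - v 0 * u 3)
        + n 3 * (u 0 * v 2 - v 0 * u 2)),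
      n 0 * (u 1 * v 3 - v 1 * u 3) - n 1 * (u 0 * v 3 - v 0 * u 3) + n 3 * (u 0 * v 1 - v 0 * u 1),
      -(n 0 * (u 1 * v 2 - v 1 * u 2) - n 1 * (u 0 * v 2 - v 0 * u 2)
        + n 2 * (u 0 * v 1 - v 0 * u 1))] := by
  ext i
  fin_cases i <;>
    simp [hodge, wedge, lc, Matrix.mulVec, dotProduct, Fin.sum_univ_four] <;> ring

theorem hodge_ker (u v n : Fin 4 → ℝ) (h : LinearIndependent ℝ ![u, v]) :
    (hodge (wedge u v)).mulVec n = 0 ↔ n ∈ Submodule.span ℝ ({u, v} : Set (Fin 4 → ℝ)) := by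
  rw [Submodule.mem_span_pair, hodge_mulVec_eq]
  constructor
  · intro hn
    have e0 := congrFun hn 0
    have e1 := congrFun hn 1
    have e2 := congrFun hn 2
    have e3 := congrFun hn 3
    simp at e0 e1 e2 e3
    have hp : ∃ i j, u i * v j - v i * u j ≠ 0 := by
      by_contra! hc
      rw [LinearIndependent.pair_iff] at h
      have hu : u = 0 := by
        ext j
        have := h (v j) (- u j) (by ext i; have := hc i j; simp; linarith)
        simpa using this.2
      have := h 1 0 (by simp [hu])
      simp at this
    obtain ⟨i, j, hij⟩ := hp
    have key : ∀ i j k, n k * (u i * v j - v i * u j) =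
        (n i * v j - n j * v i) * u k + (u i * n j - u j * n i) * v k := by
      intro i j k
      fin_cases i <;> fin_cases j <;> fin_cases k <;>
        simp only [Fin.zero_eta, Fin.mk_one, Fin.reduceFinMk] <;> linarith
    refine ⟨(n i * v j - n j * v i) / (u i * v j - v i * u j),
      (u i * n j - u j * n i) / (u i * v j - v i * u j), ?_⟩
    ext k
    have := key i j k
    simp only [Pi.add_apply, Pi.smul_apply, smul_eq_mul]
    rw [div_mul_eq_mul_div, div_mul_eq_mul_div, ← add_div, div_eq_iff hij, this]
  · rintro ⟨a, b, rfl⟩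
    ext i
    fin_cases i <;> simp <;> ring

theorem finrank_pair (u v : Fin 4 → ℝ) (h : LinearIndependent ℝ ![u, v]) :
    Module.finrank ℝ ↥(Submodule.span ℝ ({u, v} : Set (Fin 4 → ℝ))) = 2 := by
  have := finrank_span_eq_card h
  have hr : Set.range ![u, v] = {u, v} := by
    ext x; simp [eq_comm, or_comm]
  rw [hr] at this
  simpa using this

/-- For two simple bivectors `X₁ = u₁ ∧ v₁`, `X₂ = u₂ ∧ v₂` with each pair linearly
independent, there is a common nonzero vector annihilated by both Hodge duals iff
the span of the four vectors has dimension at most 3. -/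
theorem dual_cross_simplicity_iff_span_dim_le_three (u₁ v₁ u₂ v₂ : Fin 4 → ℝ)
    (h₁ : LinearIndependent ℝ ![u₁, v₁]) (h₂ : LinearIndependent ℝ ![u₂, v₂]) :
    (∃ n : Fin 4 → ℝ, n ≠ 0 ∧ (hodge (wedge u₁ v₁)).mulVec n = 0 ∧
        (hodge (wedge u₂ v₂)).mulVec n = 0) ↔
      Module.finrank ℝ ↥(Submodule.span ℝ ({u₁, v₁, u₂, v₂} : Set (Fin 4 → ℝ))) ≤ 3 := by
  simp only [hodge_ker _ _ _ h₁, hodge_ker _ _ _ h₂]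
  have hs : ({u₁, v₁, u₂, v₂} : Set (Fin 4 → ℝ)) = {u₁, v₁} ∪ {u₂, v₂} := by
    ext x; simp; tauto
  rw [hs, Submodule.span_union]
  have hd := Submodule.finrank_sup_add_finrank_inf_eq
    (Submodule.span ℝ ({u₁, v₁} : Set (Fin 4 → ℝ))) (Submodule.span ℝ ({u₂, v₂} : Set (Fin 4 → ℝ)))
  rw [finrank_pair _ _ h₁, finrank_pair _ _ h₂] at hd
  constructor
  · rintro ⟨n, hn, ha, hb⟩
    by_contra hc
    have h0 : Module.finrank ℝ ↥(Submodule.span ℝ ({u₁, v₁} : Set (Fin 4 → ℝ)) ⊓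
      Submodule.span ℝ ({u₂, v₂} : Set (Fin 4 → ℝ))) = 0 := by omega
    rw [Submodule.finrank_eq_zero] at h0
    have : n ∈ (⊥ : Submodule ℝ (Fin 4 → ℝ)) := h0 ▸ Submodule.mem_inf.2 ⟨ha, hb⟩
    exact hn (by simpa using this)
  · intro hc
    have hne : Submodule.span ℝ ({u₁, v₁} : Set (Fin 4 → ℝ)) ⊓
        Submodule.span ℝ ({u₂, v₂} : Set (Fin 4 → ℝ)) ≠ ⊥ := by
      intro h0
      rw [← Submodule.finrank_eq_zero (R := ℝ)] at h0
      omega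
    obtain ⟨n, hn, hn0⟩ := Submodule.exists_mem_ne_zero_of_ne_bot hne
    exact ⟨n, hn0, hn.1, hn.2⟩
end
end

section
/- A real antisymmetric 4×4 matrix X is simple if and only if the quadratic simplicity constraint Σ_{I,J,K,L} ε_{IJKL} X^{IJ} X^{KL} = 0 holds (equivalently, Σ_{I,J} X^{IJ} X̃_{IJ} = 0, where X̃ is the Hodge dual of X). -/
open Matrix BigOperators

noncomputable section

theorem plucker_aux (X : Matrix (Fin 4) (Fin 4) ℝ) (h : ∀ i j, X j i = -X i j)
    (hp : X 0 1 * X 2 3 - X 0 2 * X 1 3 + X 0 3 * X 1 2 = 0) (a b i j : Fin 4) :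
    X i j * X a b = X i b * X a j - X a i * X j b := by
  have d (i : Fin 4) : X i i = 0 := by have := h i i; linarith
  have h1 := h 0 1
  have h2 := h 0 2
  have h3 := h 0 3
  have h4 := h 1 2
  have h5 := h 1 3
  have h6 := h 2 3
  fin_cases a <;> fin_cases b <;> fin_cases i <;> fin_cases j <;>
    simp only [Fin.zero_eta, Fin.mk_one, Fin.reduceFinMk, d, h1, h2, h3, h4, h5, h6] <;>
    linarith

theorem simple_iff_pf (X : Matrix (Fin 4) (Fin 4) ℝ) (h : ∀ i j, X j i = -X i j) :
    (∃ u v : Fin 4 → ℝ, X = wedge u v) ↔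
      X 0 1 * X 2 3 - X 0 2 * X 1 3 + X 0 3 * X 1 2 = 0 := by
  constructor
  · rintro ⟨u, v, rfl⟩
    simp only [wedge, Matrix.of_apply]
    ring
  · intro hp
    by_cases h0 : X = 0
    · refine ⟨0, 0, ?_⟩
      ext i j
      simp [wedge, h0]
    · obtain ⟨a, b, hab⟩ : ∃ a b, X a b ≠ 0 := by
        by_contra! hc
        exact h0 (by ext i j; simpa using hc i j)
      refine ⟨fun i => X i b / X a b, fun j => X a j, ?_⟩
      ext i j
      simp only [wedge, Matrix.of_apply]
      have := plucker_aux X h hp a b i j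
      field_simp
      linarith

theorem sum_eq_pf (X : Matrix (Fin 4) (Fin 4) ℝ) (h : ∀ i j, X j i = -X i j) :
    ∑ i, ∑ j, ∑ k, ∑ l, lc i j k l * X i j * X k l =
      8 * (X 0 1 * X 2 3 - X 0 2 * X 1 3 + X 0 3 * X 1 2) := by
  have h1 := h 0 1
  have h2 := h 0 2
  have h3 := h 0 3
  have h4 := h 1 2
  have h5 := h 1 3
  have h6 := h 2 3
  simp [Fin.sum_univ_four, lc, h1, h2, h3, h4, h5, h6]
  ring

theorem hodge_sum (X : Matrix (Fin 4) (Fin 4) ℝ) :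
    ∑ i, ∑ j, X i j * hodge X i j =
      (1 / 2) * ∑ i, ∑ j, ∑ k, ∑ l, lc i j k l * X i j * X k l := by
  simp only [hodge, Matrix.of_apply, Finset.mul_sum]
  refine Finset.sum_congr rfl fun i _ => Finset.sum_congr rfl fun j _ =>
    Finset.sum_congr rfl fun k _ => Finset.sum_congr rfl fun l _ => ?_
  ring

/-- A real antisymmetric 4×4 matrix `X` is simple iff the quadratic simplicity
constraint `Σ ε_{IJKL} X^{IJ} X^{KL} = 0` holds (equivalently `Σ X^{IJ} X̃_{IJ} = 0`). -/
theorem simple_iff_quadratic_constraint (X : Matrix (Fin 4) (Fin 4) ℝ)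
    (hX : Xᵀ = -X) :
    ((∃ u v : Fin 4 → ℝ, X = wedge u v) ↔
        ∑ i, ∑ j, ∑ k, ∑ l, lc i j k l * X i j * X k l = 0) ∧
    ((∃ u v : Fin 4 → ℝ, X = wedge u v) ↔
        ∑ i, ∑ j, X i j * hodge X i j = 0) := by
  have h : ∀ i j, X j i = -X i j := fun i j => congrFun (congrFun hX i) j
  rw [hodge_sum, sum_eq_pf X h, simple_iff_pf X h]
  constructor <;> constructor <;> intro h <;> linarith
end
end

section
/- For every real antisymmetric 4×4 matrix X there exist an orthonormal basis (e⁰, e¹, e², e³) of ℝ⁴ with positive orientation (the matrix with columns e⁰, e¹, e², e³ has determinant 1) and real numbers α, β with α ≥ |β| such that X = α (e¹∧e²) + β (e⁰∧e³); that is, every bivector can be brought to the normal form α e¹∧e² + β e⁰∧e³ with α ≥ |β| with respect to some oriented orthonormal frame. -/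
open Matrix BigOperators

noncomputable section

lemma rot_zero (a b : ℝ) (h : ∀ c s : ℝ, c ^ 2 + s ^ 2 = 1 → c * a + s * b ≤ a) : b = 0 := by
  by_contra hb
  have ha : 0 ≤ a := by have := h (-1) 0 (by norm_num); linarith
  have hp : 0 < a ^ 2 + b ^ 2 := by positivity
  set r := Real.sqrt (a ^ 2 + b ^ 2) with hr
  have hr0 : 0 < r := Real.sqrt_pos.mpr hp
  have hr2 : r ^ 2 = a ^ 2 + b ^ 2 := Real.sq_sqrt hp.le
  have h1 := h (a / r) (b / r) (by field_simp; linarith)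
  have h2 : a / r * a + b / r * b = r := by field_simp; linarith
  rw [h2] at h1
  have : 0 < b ^ 2 := by positivity
  nlinarith

lemma exists_max (X : Matrix (Fin 4) (Fin 4) ℝ) :
    ∃ E : Matrix (Fin 4) (Fin 4) ℝ, Eᵀ * E = 1 ∧ E.det = 1 ∧
      ∀ R : Matrix (Fin 4) (Fin 4) ℝ, Rᵀ * R = 1 → R.det = 1 →
        (Rᵀ * (Eᵀ * X * E) * R) 1 2 ≤ (Eᵀ * X * E) 1 2 := by
  let S : Set (Matrix (Fin 4) (Fin 4) ℝ) := {E | Eᵀ * E = 1 ∧ E.det = 1}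
  have hK : IsCompact (Set.univ.pi fun _ : Fin 4 => Set.univ.pi fun _ : Fin 4 =>
      Set.Icc (-1 : ℝ) 1) :=
    isCompact_univ_pi fun _ => isCompact_univ_pi fun _ => isCompact_Icc
  have hcl : IsClosed S := by
    refine IsClosed.inter (isClosed_eq ?_ continuous_const) (isClosed_eq ?_ continuous_const)
    · fun_prop
    · fun_prop
  have hS : IsCompact S := by
    refine hK.of_isClosed_subset hcl ?_
    intro (E : Matrix (Fin 4) (Fin 4) ℝ) hES i _ j _
    have hE : Eᵀ * E = 1 := hES.1
    change E i j ∈ Set.Icc (-1 : ℝ) 1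
    have h1 : (Eᵀ * E) j j = 1 := by rw [hE]; simp
    rw [Matrix.mul_apply] at h1
    have h2 : E i j * E i j ≤ ∑ k, Eᵀ j k * E k j :=
      Finset.single_le_sum (f := fun k => Eᵀ j k * E k j)
        (fun k _ => mul_self_nonneg (E k j)) (Finset.mem_univ i)
    rw [h1] at h2
    constructor <;> nlinarith
  obtain ⟨E, ⟨hE, hd⟩, hmax⟩ := hS.exists_isMaxOn ⟨1, by simp [S]⟩
    (f := fun E => (Eᵀ * X * E) 1 2) (by
      apply Continuous.continuousOn
      have : Continuous fun E : Matrix (Fin 4) (Fin 4) ℝ => Eᵀ * X * E := by fun_prop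
      exact this.matrix_elem 1 2)
  refine ⟨E, hE, hd, fun R hR hRd => ?_⟩
  have := hmax (a := E * R) ⟨by
    rw [Matrix.transpose_mul, Matrix.mul_assoc, ← Matrix.mul_assoc Eᵀ, hE, Matrix.one_mul, hR],
    by rw [Matrix.det_mul, hd, hRd, one_mul]⟩
  simpa [Matrix.transpose_mul, Matrix.mul_assoc] using this

/-- entries of `Y` vanish at a maximum -/
lemma max_entries (Y : Matrix (Fin 4) (Fin 4) ℝ)
    (h : ∀ R : Matrix (Fin 4) (Fin 4) ℝ, Rᵀ * R = 1 → R.det = 1 → (Rᵀ * Y * R) 1 2 ≤ Y 1 2) :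
    Y 1 3 = 0 ∧ Y 1 0 = 0 ∧ Y 0 2 = 0 ∧ Y 3 2 = 0 ∧ Y 0 3 ≤ Y 1 2 ∧ Y 3 0 ≤ Y 1 2 := by
  refine ⟨rot_zero (Y 1 2) _ fun c s hcs => ?_, rot_zero (Y 1 2) _ fun c s hcs => ?_,
    rot_zero (Y 1 2) _ fun c s hcs => ?_, rot_zero (Y 1 2) _ fun c s hcs => ?_, ?_, ?_⟩
  · have := h !![1,0,0,0; 0,1,0,0; 0,0,c,-s; 0,0,s,c] ?_ ?_
    · simp [Matrix.mul_apply, Fin.sum_univ_four] at this; linarith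
    · ext i j; fin_cases i <;> fin_cases j <;> simp [Matrix.mul_apply, Fin.sum_univ_four] <;> linarith
    · simp [Matrix.det_succ_row_zero, Fin.sum_univ_succ, Fin.succAbove]; linarith
  · have := h !![c,0,s,0; 0,1,0,0; -s,0,c,0; 0,0,0,1] ?_ ?_
    · simp [Matrix.mul_apply, Fin.sum_univ_four] at this; linarith
    · ext i j; fin_cases i <;> fin_cases j <;> simp [Matrix.mul_apply, Fin.sum_univ_four] <;> linarith
    · simp [Matrix.det_succ_row_zero, Fin.sum_univ_succ, Fin.succAbove]; linarith
  · have := h !![c,s,0,0; -s,c,0,0; 0,0,1,0; 0,0,0,1] ?_ ?_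
    · simp [Matrix.mul_apply, Fin.sum_univ_four] at this; linarith
    · ext i j; fin_cases i <;> fin_cases j <;> simp [Matrix.mul_apply, Fin.sum_univ_four] <;> linarith
    · simp [Matrix.det_succ_row_zero, Fin.sum_univ_succ, Fin.succAbove]; linarith
  · have := h !![1,0,0,0; 0,c,0,-s; 0,0,1,0; 0,s,0,c] ?_ ?_
    · simp [Matrix.mul_apply, Fin.sum_univ_four] at this; linarith
    · ext i j; fin_cases i <;> fin_cases j <;> simp [Matrix.mul_apply, Fin.sum_univ_four] <;> linarith
    · simp [Matrix.det_succ_row_zero, Fin.sum_univ_succ, Fin.succAbove]; linarith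
  · have := h !![0,1,0,0; 1,0,0,0; 0,0,0,1; 0,0,1,0] ?_ ?_
    · simpa [Matrix.mul_apply, Fin.sum_univ_four] using this
    · ext i j; fin_cases i <;> fin_cases j <;> simp [Matrix.mul_apply, Fin.sum_univ_four]
    · simp [Matrix.det_succ_row_zero, Fin.sum_univ_succ, Fin.succAbove]
  · have := h !![0,0,1,0; 1,0,0,0; 0,0,0,-1; 0,1,0,0] ?_ ?_
    · simpa [Matrix.mul_apply, Fin.sum_univ_four] using this
    · ext i j; fin_cases i <;> fin_cases j <;> simp [Matrix.mul_apply, Fin.sum_univ_four]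
    · simp [Matrix.det_succ_row_zero, Fin.sum_univ_succ, Fin.succAbove]

/-- Every real antisymmetric 4×4 matrix can be brought to the normal form
`α e¹∧e² + β e⁰∧e³` with `α ≥ |β|` with respect to some positively oriented
orthonormal frame of `ℝ⁴`. -/
theorem bivector_normal_form (X : Matrix (Fin 4) (Fin 4) ℝ) (hX : Xᵀ = -X) :
    ∃ (e : Fin 4 → Fin 4 → ℝ) (α β : ℝ),
      (∀ i j : Fin 4, ∑ k, e i k * e j k = if i = j then 1 else 0) ∧
      (Matrix.of fun i j => e j i).det = 1 ∧
      α ≥ |β| ∧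
      X = α • wedge (e 1) (e 2) + β • wedge (e 0) (e 3) := by
  obtain ⟨E, hE, hd, hmax⟩ := exists_max X
  have hE' : E * Eᵀ = 1 := mul_eq_one_comm.mp hE
  obtain ⟨h13, h10, h02, h32, hb1, hb2⟩ := max_entries _ hmax
  have hXY : X = E * (Eᵀ * X * E) * Eᵀ := by
    calc X = (E * Eᵀ) * X * (E * Eᵀ) := by rw [hE']; simp
      _ = _ := by simp only [Matrix.mul_assoc]
  have hY : (Eᵀ * X * E)ᵀ = -(Eᵀ * X * E) := by
    simp [Matrix.transpose_mul, hX, Matrix.mul_assoc]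
  generalize Eᵀ * X * E = Y at *
  have hA : ∀ i j, Y j i = - Y i j := fun i j => by
    simpa using congrFun (congrFun hY i) j
  refine ⟨fun j i => E i j, Y 1 2, Y 0 3, ?_, hd, ?_, ?_⟩
  · intro i j
    have := congrFun (congrFun hE i) j
    simpa [Matrix.mul_apply, Matrix.one_apply] using this
  · rw [ge_iff_le, abs_le]
    have := hA 0 3
    constructor <;> linarith
  · have h00 := hA 0 0
    have h11 := hA 1 1
    have h22 := hA 2 2
    have h33 := hA 3 3
    have d0 : Y 0 0 = 0 := by linarith
    have d1 : Y 1 1 = 0 := by linarith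
    have d2 : Y 2 2 = 0 := by linarith
    have d3 : Y 3 3 = 0 := by linarith
    have h31 := hA 1 3
    have h01 := hA 1 0
    have h20 := hA 0 2
    have h23 := hA 3 2
    have h21 := hA 1 2
    have h30 := hA 0 3
    rw [hXY]
    ext i j
    simp only [Matrix.mul_apply, Fin.sum_univ_four, Matrix.transpose_apply, wedge,
      Matrix.add_apply, Matrix.smul_apply, Matrix.of_apply, smul_eq_mul, d0, d1, d2, d3,
      h31, h01, h20, h23, h21, h30, h13, h10, h02, h32]
    ring
end
end

section
/- Let X₁ = (t₁, y₁) and X₂ = (t₂, y₂) be two distinct points of the upper half-space model ℝ₊ × ℂ of hyperbolic 3-space, and let r > 0 be their hyperbolic distance, determined by cosh r = (1/2)·( t₁/t₂ + t₂/t₁ + t₁ t₂ |y₁ − y₂|² ). Then for every real ρ ≠ 0 the convolution of bulk-to-boundary propagators over the boundary complex plane satisfies 2 ∫_ℂ ( t₁|y₁ − z|² + t₁⁻¹ )^{−(1+iρ)} · ( t₂|y₂ − z|² + t₂⁻¹ )^{−(1−iρ)} d²z/π = 2 sin(ρ r) / (ρ sinh r), where d²z denotes Lebesgue measure on ℂ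 ≅ ℝ². -/
open MeasureTheory Complex

noncomputable def bbPhi (ρ A B : ℝ) : ℂ :=
  ((A * B)⁻¹ : ℝ) * Complex.exp (Complex.I * ρ * (Real.log (B / A) : ℝ))

lemma bbPhi_eq (ρ A B : ℝ) (hA : 0 < A) (hB : 0 < B) :
    (A : ℂ) ^ (-(1 + ρ * Complex.I)) * (B : ℂ) ^ (-(1 - ρ * Complex.I)) = bbPhi ρ A B := by
  have hA' : (A : ℂ) ≠ 0 := by exact_mod_cast hA.ne'
  have hB' : (B : ℂ) ≠ 0 := by exact_mod_cast hB.ne'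
  have h1 : (((A * B)⁻¹ : ℝ) : ℂ)
      = Complex.exp (-(Real.log A : ℝ)) * Complex.exp (-(Real.log B : ℝ)) := by
    rw [Complex.exp_neg, Complex.exp_neg, ← Complex.ofReal_exp, ← Complex.ofReal_exp,
      Real.exp_log hA, Real.exp_log hB]
    push_cast
    rw [mul_inv]
  rw [bbPhi, h1, Complex.cpow_def_of_ne_zero hA', Complex.cpow_def_of_ne_zero hB',
    ← Complex.ofReal_log hA.le, ← Complex.ofReal_log hB.le, Real.log_div hB.ne' hA.ne',
    ← Complex.exp_add, ← Complex.exp_add, ← Complex.exp_add]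
  congr 1
  push_cast
  ring

lemma bbPhi_smul (ρ A B c : ℝ) (hc : 0 < c) :
    bbPhi ρ (c * A) (c * B) = ((c ^ 2)⁻¹ : ℝ) * bbPhi ρ A B := by
  rw [bbPhi, bbPhi, mul_div_mul_left _ _ hc.ne', ← mul_assoc (((c ^ 2)⁻¹ : ℝ) : ℂ), ← Complex.ofReal_mul]
  congr 3
  rw [← mul_inv]; congr 1; ring

noncomputable def bbJ (ρ t₁ : ℝ) (y₁ : ℂ) (t₂ : ℝ) (y₂ : ℂ) : ℂ :=
  ∫ z : ℂ, bbPhi ρ (t₁ * ‖y₁ - z‖ ^ 2 + t₁⁻¹) (t₂ * ‖y₂ - z‖ ^ 2 + t₂⁻¹)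

lemma bbJ_translate (ρ t₁ : ℝ) (y₁ : ℂ) (t₂ : ℝ) (y₂ p : ℂ) :
    bbJ ρ t₁ y₁ t₂ y₂ = bbJ ρ t₁ (y₁ - p) t₂ (y₂ - p) := by
  unfold bbJ
  rw [← integral_add_right_eq_self _ p]
  congr 1; ext z
  rw [show y₁ - (z + p) = y₁ - p - z by ring, show y₂ - (z + p) = y₂ - p - z by ring]

lemma bb_det (w : ℂ) :
    ((ContinuousLinearMap.toSpanSingleton ℂ w).restrictScalars ℝ : ℂ →L[ℝ] ℂ).det
      = ‖w‖ ^ 2 := by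
  have : Algebra.norm ℝ w = ‖w‖ ^ 2 := by
    rw [Algebra.norm_complex_apply, Complex.normSq_eq_norm_sq]
  rw [← this, Algebra.norm_apply]
  rw [ContinuousLinearMap.det]
  congr 1
  ext <;> simp [mul_comm]

lemma bb_inv (g : ℂ → ℂ) :
    ∫ z : ℂ, g z = ∫ w : ℂ, ((‖w‖ ^ 4)⁻¹ : ℝ) * g w⁻¹ := by
  have hs : MeasurableSet ({0}ᶜ : Set ℂ) := (measurableSet_singleton 0).compl
  have him : (fun w : ℂ => w⁻¹) '' ({0}ᶜ : Set ℂ) = {0}ᶜ := by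
    ext w
    constructor
    · rintro ⟨v, hv, rfl⟩
      simpa using hv
    · intro hw
      exact ⟨w⁻¹, by simpa using hw, by simp⟩
  have h0 : ∀ f : ℂ → ℂ, ∫ z in ({0}ᶜ : Set ℂ), f z = ∫ z, f z := by
    intro f
    rw [Measure.restrict_eq_self_of_ae_mem]
    rw [ae_iff]
    simp
  have key := integral_image_eq_integral_abs_det_fderiv_smul (volume : Measure ℂ) hs
    (f := fun w : ℂ => w⁻¹)
    (f' := fun w => (ContinuousLinearMap.toSpanSingleton ℂ (-(w ^ 2)⁻¹)).restrictScalars ℝ)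
    (fun x hx => ((hasDerivAt_inv hx).hasFDerivAt.restrictScalars ℝ).hasFDerivWithinAt)
    (fun a _ b _ h => inv_injective h) g
  rw [him, h0, h0] at key
  rw [key]
  congr 1; ext w
  rw [bb_det, Complex.real_smul]
  congr 2
  simp
  ring

lemma bb_cov (t : ℝ) (ht : 0 < t) (y w : ℂ) (hw : w ≠ 0) :
    t * ‖y - w⁻¹‖ ^ 2 + t⁻¹ = (‖w‖ ^ 2)⁻¹ *
      ((t * ‖y‖ ^ 2 + t⁻¹) * ‖(t / (t * ‖y‖ ^ 2 + t⁻¹) : ℝ) * (starRingEnd ℂ) y - w‖ ^ 2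
        + (t * ‖y‖ ^ 2 + t⁻¹)⁻¹) := by
  have h1 : y - w⁻¹ = (y * w - 1) * w⁻¹ := by field_simp
  have hw2 : ‖w‖ ^ 2 ≠ 0 := by positivity
  have hT : 0 < t * ‖y‖ ^ 2 + t⁻¹ := by positivity
  set T := t * ‖y‖ ^ 2 + t⁻¹ with hTd
  have e1 : ‖y * w - 1‖ ^ 2 = ‖y‖ ^ 2 * ‖w‖ ^ 2 - 2 * (y * w).re + 1 := by
    simp only [← Complex.normSq_eq_norm_sq, Complex.normSq_apply]
    simp
    ring
  have e2 : ‖(t / T : ℝ) * (starRingEnd ℂ) y - w‖ ^ 2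
      = (t / T) ^ 2 * ‖y‖ ^ 2 - 2 * (t / T) * (y * w).re + ‖w‖ ^ 2 := by
    simp only [← Complex.normSq_eq_norm_sq, Complex.normSq_apply]
    simp
    ring
  rw [h1, norm_mul, mul_pow, e1, e2, norm_inv, inv_pow]
  have hy : ‖y‖ ^ 2 = (T - t⁻¹) / t := by rw [hTd]; field_simp; ring
  rw [hy]
  field_simp
  ring

lemma bbJ_inv (ρ t₁ : ℝ) (y₁ : ℂ) (t₂ : ℝ) (y₂ : ℂ) (ht₁ : 0 < t₁) (ht₂ : 0 < t₂) :
    bbJ ρ t₁ y₁ t₂ y₂ = bbJ ρ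
      (t₁ * ‖y₁‖ ^ 2 + t₁⁻¹) ((t₁ / (t₁ * ‖y₁‖ ^ 2 + t₁⁻¹) : ℝ) * (starRingEnd ℂ) y₁)
      (t₂ * ‖y₂‖ ^ 2 + t₂⁻¹) ((t₂ / (t₂ * ‖y₂‖ ^ 2 + t₂⁻¹) : ℝ) * (starRingEnd ℂ) y₂) := by
  unfold bbJ
  rw [bb_inv]
  apply integral_congr_ae
  have : ∀ᵐ w : ℂ, w ≠ 0 := by rw [ae_iff]; simp
  filter_upwards [this] with w hw
  rw [bb_cov t₁ ht₁ y₁ w hw, bb_cov t₂ ht₂ y₂ w hw, bbPhi_smul _ _ _ _ (by positivity),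
    ← mul_assoc, ← Complex.ofReal_mul]
  have : (‖w‖ ^ 4)⁻¹ * (((‖w‖ ^ 2)⁻¹) ^ 2)⁻¹ = 1 := by
    have : ‖w‖ ≠ 0 := by simpa using hw
    field_simp
  rw [this]; simp

lemma bb_radial (ρ t₁ t₂ : ℝ) (ht₁ : 0 < t₁) (ht₂ : 0 < t₂) (hρ : ρ ≠ 0) (hne : t₁ ≠ t₂) :
    bbJ ρ t₁ 0 t₂ 0 = Real.pi *
      ((Complex.exp (Complex.I * ρ * (Real.log (t₂ / t₁) : ℝ))
        - Complex.exp (Complex.I * ρ * (-Real.log (t₂ / t₁) : ℝ)))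
        / (Complex.I * ρ * (t₂ / t₁ - t₁ / t₂ : ℝ))) := by
  have hD : t₂ / t₁ - t₁ / t₂ ≠ 0 := by
    intro h
    apply hne
    field_simp at h
    nlinarith
  set D := t₂ / t₁ - t₁ / t₂ with hDd
  set f : ℝ → ℂ := fun x => bbPhi ρ (t₁ * x ^ 2 + t₁⁻¹) (t₂ * x ^ 2 + t₂⁻¹) with hf
  set L : ℝ → ℝ := fun x => Real.log ((t₂ * x ^ 2 + t₂⁻¹) / (t₁ * x ^ 2 + t₁⁻¹)) with hL
  have hLd : ∀ x, HasDerivAt L (2 * D *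
      (x * ((t₁ * x ^ 2 + t₁⁻¹) * (t₂ * x ^ 2 + t₂⁻¹))⁻¹)) x := by
    intro x
    have hA : 0 < t₁ * x ^ 2 + t₁⁻¹ := by positivity
    have hB : 0 < t₂ * x ^ 2 + t₂⁻¹ := by positivity
    have dA : ∀ t : ℝ, HasDerivAt (fun x : ℝ => t * x ^ 2 + t⁻¹) (t * (2 * x)) x := by
      intro t
      have := ((hasDerivAt_pow 2 x).const_mul t).add_const t⁻¹
      simpa using this
    have := ((dA t₂).div (dA t₁) hA.ne').log (div_pos hB hA).ne'
    refine HasDerivAt.congr_deriv (f := L) this ?_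
    rw [hDd]
    simp only [Pi.div_apply]
    field_simp
    ring
  have hLlim : Filter.Tendsto L Filter.atTop (nhds (Real.log (t₂ / t₁))) := by
    have hi : Filter.Tendsto (fun x : ℝ => (x ^ 2)⁻¹) Filter.atTop (nhds 0) :=
      (Filter.tendsto_pow_atTop two_ne_zero).inv_tendsto_atTop
    have h2 : ∀ t : ℝ, Filter.Tendsto (fun x : ℝ => t + t⁻¹ * (x ^ 2)⁻¹) Filter.atTop
        (nhds t) := by
      intro t
      simpa using (hi.const_mul t⁻¹).const_add t
    have h3 := ((h2 t₂).div (h2 t₁) ht₁.ne').log (by positivity)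
    refine h3.congr' ?_
    filter_upwards [Filter.eventually_gt_atTop 0] with x hx
    simp only [hL, Pi.div_apply]
    congr 1
    field_simp
  have hint0 : IntegrableOn (fun x : ℝ =>
      x * ((t₁ * x ^ 2 + t₁⁻¹) * (t₂ * x ^ 2 + t₂⁻¹))⁻¹) (Set.Ioi 0) := by
    refine integrableOn_Ioi_deriv_of_nonneg (g := fun x => L x / (2 * D)) 
      (l := Real.log (t₂ / t₁) / (2 * D)) ?_ ?_ ?_ ?_
    · exact ((hLd 0).continuousAt.div_const _).continuousWithinAt
    · intro x _
      refine ((hLd x).div_const (2 * D)).congr_deriv ?_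
      field_simp
    · intro x hx
      have : 0 < x := hx
      positivity
    · exact hLlim.div_const _
  have hI : Complex.I * ρ ≠ 0 := mul_ne_zero Complex.I_ne_zero (by exact_mod_cast hρ)
  have hρc : (ρ : ℂ) ≠ 0 := by exact_mod_cast hρ
  have hDc : (D : ℂ) ≠ 0 := by exact_mod_cast hD
  set F : ℝ → ℂ := fun x => Complex.exp (Complex.I * ρ * (L x : ℝ)) / (Complex.I * ρ * (2 * D))
    with hF
  have hFd : ∀ x, HasDerivAt F (x • f x) x := by
    intro x
    have := (((hLd x).ofReal_comp.const_mul (Complex.I * ρ)).cexp).div_const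
      (Complex.I * ρ * (2 * D))
    refine HasDerivAt.congr_deriv (f := F) this ?_
    simp only [hf, hL, bbPhi, Complex.real_smul]
    push_cast
    field_simp
  have hint : IntegrableOn (fun x : ℝ => x • f x) (Set.Ioi 0) := by
    refine Integrable.mono hint0 ?_ ?_
    · have : (fun x : ℝ => x • f x) = deriv F := by
        ext x; exact (hFd x).deriv.symm
      rw [this]
      exact (measurable_deriv F).aestronglyMeasurable
    · refine Filter.Eventually.of_forall fun x => ?_
      simp only [hf, bbPhi]
      rw [norm_smul, norm_mul, norm_mul, Complex.norm_real,
        show Complex.I * ρ * ((Real.log ((t₂ * x ^ 2 + t₂⁻¹) / (t₁ * x ^ 2 + t₁⁻¹)) : ℝ) : ℂ)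
          = ((ρ * Real.log ((t₂ * x ^ 2 + t₂⁻¹) / (t₁ * x ^ 2 + t₁⁻¹)) : ℝ) : ℂ) * Complex.I by
          push_cast; ring, Complex.norm_exp_ofReal_mul_I, mul_one]
  have hFlim : Filter.Tendsto F Filter.atTop (nhds
      (Complex.exp (Complex.I * ρ * (Real.log (t₂ / t₁) : ℝ)) / (Complex.I * ρ * (2 * D)))) := by
    have hc : Continuous fun l : ℝ =>
        Complex.exp (Complex.I * ρ * (l : ℝ)) / (Complex.I * ρ * (2 * D)) := by fun_prop
    exact (hc.tendsto _).comp hLlim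
  have hval := integral_Ioi_of_hasDerivAt_of_tendsto (hFd 0).continuousAt.continuousWithinAt
    (fun x _ => hFd x) hint hFlim
  have hL0 : L 0 = -Real.log (t₂ / t₁) := by
    simp only [hL]
    rw [← Real.log_inv]
    congr 1
    field_simp
    simp
  have hpol := integral_fun_norm_addHaar (volume : Measure ℂ) f
  have hb : (volume : Measure ℂ).real (Metric.ball 0 1) = Real.pi := by
    simp [Measure.real, Complex.volume_ball]
  rw [hb, Complex.finrank_real_complex] at hpol
  simp only [Nat.add_one_sub_one, pow_one] at hpol
  rw [hval] at hpol
  have : bbJ ρ t₁ 0 t₂ 0 = ∫ x : ℂ, f ‖x‖ := by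
    unfold bbJ
    simp [hf]
  rw [this, hpol]
  simp only [hF, hL0]
  simp only [Complex.real_smul, nsmul_eq_mul]
  push_cast
  field_simp

lemma bb_log (t₁ t₂ r : ℝ) (ht₁ : 0 < t₁) (ht₂ : 0 < t₂)
    (hcosh : Real.cosh r = (1 / 2) * (t₁ / t₂ + t₂ / t₁)) :
    t₂ / t₁ = Real.exp r ∨ t₂ / t₁ = Real.exp (-r) := by
  rw [Real.cosh_eq, Real.exp_neg] at hcosh
  have he := Real.exp_pos r
  have h : (t₂ / t₁ - Real.exp r) * (t₂ / t₁ - (Real.exp r)⁻¹) = 0 := by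
    have h1 : t₁ / t₂ = (t₂ / t₁)⁻¹ := by simp
    have hu : 0 < t₂ / t₁ := by positivity
    rw [h1] at hcosh
    set u := t₂ / t₁
    set e := Real.exp r
    have h2 : e + e⁻¹ = u⁻¹ + u := by linarith
    have h3 : e * e⁻¹ = 1 := by field_simp
    have h4 : u * u⁻¹ = 1 := by field_simp
    linear_combination (-u) * h2 + h3 - h4
  rw [Real.exp_neg]
  rcases mul_eq_zero.mp h with h | h
  · left; linarith
  · right; linarith

lemma bb_vert (ρ t₁ t₂ r : ℝ) (y : ℂ) (ht₁ : 0 < t₁) (ht₂ : 0 < t₂) (hρ : ρ ≠ 0) (hr : 0 < r)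
    (hcosh : Real.cosh r = (1 / 2) * (t₁ / t₂ + t₂ / t₁)) :
    bbJ ρ t₁ y t₂ y = Real.pi * ((Real.sin (ρ * r) / (ρ * Real.sinh r) : ℝ) : ℂ) := by
  have hsh : Real.sinh r ≠ 0 := (Real.sinh_pos_iff.mpr hr).ne'
  rw [bbJ_translate ρ t₁ y t₂ y y, sub_self]
  have hne : t₁ ≠ t₂ := by
    rintro rfl
    rcases bb_log t₁ t₁ r ht₁ ht₁ hcosh with h | h <;> rw [div_self ht₁.ne'] at h
    · have := Real.exp_eq_one_iff r |>.mp h.symm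
      linarith
    · have := Real.exp_eq_one_iff (-r) |>.mp h.symm
      linarith
  rw [bb_radial ρ t₁ t₂ ht₁ ht₂ hρ hne]
  congr 1
  have hρ' : (ρ : ℂ) ≠ 0 := by exact_mod_cast hρ
  have hsh' : Complex.sinh (r : ℂ) ≠ 0 := by exact_mod_cast hsh
  have hinv : t₁ / t₂ = (t₂ / t₁)⁻¹ := by simp
  have h1 : ∀ s : ℝ, Real.exp s - (Real.exp s)⁻¹ = 2 * Real.sinh s := by
    intro s; rw [Real.sinh_eq, Real.exp_neg]; ring
  have h2 : ∀ s : ℝ, Complex.exp (Complex.I * ρ * (s : ℝ)) - Complex.exp (Complex.I * ρ * (-s : ℝ))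
      = 2 * Complex.I * Complex.sin (ρ * s) := by
    intro s
    rw [show Complex.I * ρ * (s : ℝ) = (ρ * s : ℂ) * Complex.I by ring,
      show Complex.I * ρ * (-s : ℝ) = -(ρ * s : ℂ) * Complex.I by push_cast; ring,
      Complex.sin]
    linear_combination (Complex.exp (-(ρ * s : ℂ) * Complex.I) - Complex.exp ((ρ * s : ℂ) * Complex.I)) * (-Complex.I_sq)
  rw [hinv]
  rcases bb_log t₁ t₂ r ht₁ ht₂ hcosh with h | h
  · rw [h, Real.log_exp, h1, h2]
    push_cast
    field_simp
  · rw [h, Real.log_exp, h1, h2, Real.sinh_neg]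
    push_cast
    rw [mul_neg, Complex.sin_neg]
    field_simp

lemma bb_cosh_inv (t₁ t₂ : ℝ) (y₁ y₂ : ℂ) (ht₁ : 0 < t₁) (ht₂ : 0 < t₂) (T₁ T₂ : ℝ)
    (hT₁ : T₁ = t₁ * ‖y₁‖ ^ 2 + t₁⁻¹) (hT₂ : T₂ = t₂ * ‖y₂‖ ^ 2 + t₂⁻¹)
    (h : (t₁ / T₁ : ℝ) * y₁ = (t₂ / T₂ : ℝ) * y₂) :
    t₁ / t₂ + t₂ / t₁ + t₁ * t₂ * ‖y₁ - y₂‖ ^ 2 = T₁ / T₂ + T₂ / T₁ := by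
  have p1 : 0 < T₁ := by rw [hT₁]; positivity
  have p2 : 0 < T₂ := by rw [hT₂]; positivity
  have hre := congrArg Complex.re h
  have him := congrArg Complex.im h
  simp only [Complex.re_ofReal_mul, Complex.im_ofReal_mul] at hre him
  simp only [← Complex.normSq_eq_norm_sq, Complex.normSq_apply, Complex.sub_re,
    Complex.sub_im] at *
  have gen : t₁ / t₂ + t₂ / t₁ + t₁ * t₂ * ((y₁.re - y₂.re) * (y₁.re - y₂.re) +
      (y₁.im - y₂.im) * (y₁.im - y₂.im)) = T₁ / T₂ + T₂ / T₁ + T₁ * T₂ *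
      ((t₁ / T₁ * y₁.re - t₂ / T₂ * y₂.re) ^ 2 + (t₁ / T₁ * y₁.im - t₂ / T₂ * y₂.im) ^ 2) := by
    have q1 : t₁ * T₁ = t₁ ^ 2 * (y₁.re * y₁.re + y₁.im * y₁.im) + 1 := by
      rw [hT₁]; field_simp
    have q2 : t₂ * T₂ = t₂ ^ 2 * (y₂.re * y₂.re + y₂.im * y₂.im) + 1 := by
      rw [hT₂]; field_simp
    have e : T₁ / T₂ + T₂ / T₁ + T₁ * T₂ *
      ((t₁ / T₁ * y₁.re - t₂ / T₂ * y₂.re) ^ 2 + (t₁ / T₁ * y₁.im - t₂ / T₂ * y₂.im) ^ 2)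
      = T₁ / T₂ * (1 + t₂ ^ 2 * (y₂.re * y₂.re + y₂.im * y₂.im)) +
        T₂ / T₁ * (1 + t₁ ^ 2 * (y₁.re * y₁.re + y₁.im * y₁.im))
        - 2 * t₁ * t₂ * (y₁.re * y₂.re + y₁.im * y₂.im) := by
      field_simp
      ring
    rw [e, add_comm 1, add_comm 1, ← q1, ← q2]
    have e3 : T₁ / T₂ * (t₂ * T₂) + T₂ / T₁ * (t₁ * T₁) = T₁ * t₂ + T₂ * t₁ := by
      field_simp
    rw [e3, hT₁, hT₂]
    field_simp
    ring
  rw [gen, hre, him]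
  ring

lemma bb_exists (a b : ℝ) (ha : 0 < a) (y₁ y₂ : ℂ) (hne : y₁ ≠ y₂) :
    ∃ p : ℂ, ((‖y₂ - p‖ ^ 2 + b : ℝ) : ℂ) * (y₁ - p) = ((‖y₁ - p‖ ^ 2 + a : ℝ) : ℂ) * (y₂ - p) := by
  have hd : 0 < ‖y₂ - y₁‖ ^ 2 := by
    have : y₂ - y₁ ≠ 0 := sub_ne_zero.mpr hne.symm
    positivity
  set d := ‖y₂ - y₁‖ ^ 2 with hdd
  obtain ⟨k, hk⟩ := exists_quadratic_eq_zero (a := d) (b := a - b - d) (c := -a) hd.ne'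
    ⟨Real.sqrt (discrim d (a - b - d) (-a)), (Real.mul_self_sqrt (by
      rw [discrim]; nlinarith [sq_nonneg (a - b - d), mul_pos hd ha])).symm⟩
  refine ⟨y₁ + k * (y₂ - y₁), ?_⟩
  have e1 : y₁ - (y₁ + k * (y₂ - y₁)) = ((-k : ℝ) : ℂ) * (y₂ - y₁) := by push_cast; ring
  have e2 : y₂ - (y₁ + k * (y₂ - y₁)) = ((1 - k : ℝ) : ℂ) * (y₂ - y₁) := by push_cast; ring
  rw [e1, e2, norm_mul, norm_mul, mul_pow, mul_pow, Complex.norm_real, Complex.norm_real,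
    Real.norm_eq_abs, Real.norm_eq_abs, sq_abs, sq_abs, ← hdd, ← mul_assoc, ← mul_assoc,
    ← Complex.ofReal_mul, ← Complex.ofReal_mul]
  congr 2
  linear_combination hk

lemma bb_main (ρ t₁ t₂ r : ℝ) (y₁ y₂ : ℂ) (ht₁ : 0 < t₁) (ht₂ : 0 < t₂) (hρ : ρ ≠ 0) (hr : 0 < r)
    (hcosh : Real.cosh r = (1 / 2) * (t₁ / t₂ + t₂ / t₁ + t₁ * t₂ * ‖y₁ - y₂‖ ^ 2)) :
    bbJ ρ t₁ y₁ t₂ y₂ = Real.pi * ((Real.sin (ρ * r) / (ρ * Real.sinh r) : ℝ) : ℂ) := by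
  by_cases hy : y₁ = y₂
  · subst hy
    apply bb_vert _ _ _ _ _ ht₁ ht₂ hρ hr
    simpa using hcosh
  obtain ⟨p, hp⟩ := bb_exists (t₁ ^ 2)⁻¹ (t₂ ^ 2)⁻¹ (by positivity) y₁ y₂ hy
  rw [bbJ_translate ρ t₁ y₁ t₂ y₂ p]
  rw [show y₁ - y₂ = (y₁ - p) - (y₂ - p) by ring] at hcosh
  generalize y₁ - p = x₁ at *
  generalize y₂ - p = x₂ at *
  rw [bbJ_inv _ _ _ _ _ ht₁ ht₂]
  have p1 : 0 < t₁ * ‖x₁‖ ^ 2 + t₁⁻¹ := by positivity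
  have p2 : 0 < t₂ * ‖x₂‖ ^ 2 + t₂⁻¹ := by positivity
  have r1 : t₁ / (t₁ * ‖x₁‖ ^ 2 + t₁⁻¹) = (‖x₁‖ ^ 2 + (t₁ ^ 2)⁻¹)⁻¹ := by
    field_simp
  have r2 : t₂ / (t₂ * ‖x₂‖ ^ 2 + t₂⁻¹) = (‖x₂‖ ^ 2 + (t₂ ^ 2)⁻¹)⁻¹ := by
    field_simp
  have h : ((t₁ / (t₁ * ‖x₁‖ ^ 2 + t₁⁻¹) : ℝ) : ℂ) * x₁
      = ((t₂ / (t₂ * ‖x₂‖ ^ 2 + t₂⁻¹) : ℝ) : ℂ) * x₂ := by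
    rw [r1, r2, Complex.ofReal_inv, Complex.ofReal_inv]
    have n1 : ((‖x₁‖ ^ 2 + (t₁ ^ 2)⁻¹ : ℝ) : ℂ) ≠ 0 := by
      rw [Complex.ofReal_ne_zero]; positivity
    have n2 : ((‖x₂‖ ^ 2 + (t₂ ^ 2)⁻¹ : ℝ) : ℂ) ≠ 0 := by
      rw [Complex.ofReal_ne_zero]; positivity
    rw [inv_mul_eq_iff_eq_mul₀ n1, mul_left_comm, eq_inv_mul_iff_mul_eq₀ n2]
    exact hp
  have h' : ((t₁ / (t₁ * ‖x₁‖ ^ 2 + t₁⁻¹) : ℝ) : ℂ) * (starRingEnd ℂ) x₁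
      = ((t₂ / (t₂ * ‖x₂‖ ^ 2 + t₂⁻¹) : ℝ) : ℂ) * (starRingEnd ℂ) x₂ := by
    have := congrArg (starRingEnd ℂ) h
    rwa [map_mul, map_mul, Complex.conj_ofReal, Complex.conj_ofReal] at this
  rw [h']
  apply bb_vert _ _ _ _ _ p1 p2 hρ hr
  rw [hcosh, bb_cosh_inv t₁ t₂ x₁ x₂ ht₁ ht₂ _ _ rfl rfl h]

/-- Convolution of bulk-to-boundary propagators on hyperbolic 3-space (upper
half-space model): for distinct points `X₁ = (t₁,y₁)`, `X₂ = (t₂,y₂)` at hyperbolic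
distance `r > 0` and `ρ ≠ 0`,
`2 ∫_ℂ (t₁|y₁−z|²+t₁⁻¹)^{−(1+iρ)} (t₂|y₂−z|²+t₂⁻¹)^{−(1−iρ)} d²z/π = 2 sin(ρr)/(ρ sinh r)`. -/
theorem bulk_to_boundary_convolution (t₁ t₂ : ℝ) (ht₁ : 0 < t₁) (ht₂ : 0 < t₂)
    (y₁ y₂ : ℂ) (hne : (t₁, y₁) ≠ (t₂, y₂)) (r : ℝ) (hr : 0 < r)
    (hcosh : Real.cosh r = (1 / 2) * (t₁ / t₂ + t₂ / t₁ + t₁ * t₂ * ‖y₁ - y₂‖ ^ 2))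
    (ρ : ℝ) (hρ : ρ ≠ 0) :
    2 * ∫ z : ℂ,
        ((t₁ * ‖y₁ - z‖ ^ 2 + t₁⁻¹ : ℂ) ^ (-(1 + ρ * Complex.I)) *
          (t₂ * ‖y₂ - z‖ ^ 2 + t₂⁻¹ : ℂ) ^ (-(1 - ρ * Complex.I))) / (Real.pi : ℂ)
      = ((2 * Real.sin (ρ * r) / (ρ * Real.sinh r) : ℝ) : ℂ) := by
  have hmain := bb_main ρ t₁ t₂ r y₁ y₂ ht₁ ht₂ hρ hr hcosh
  have hpi : (Real.pi : ℂ) ≠ 0 := by exact_mod_cast Real.pi_ne_zero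
  rw [integral_div]
  have : ∫ z : ℂ,
        ((t₁ * ‖y₁ - z‖ ^ 2 + t₁⁻¹ : ℂ) ^ (-(1 + ρ * Complex.I)) *
          (t₂ * ‖y₂ - z‖ ^ 2 + t₂⁻¹ : ℂ) ^ (-(1 - ρ * Complex.I))) = bbJ ρ t₁ y₁ t₂ y₂ := by
    unfold bbJ
    congr 1; ext z
    rw [← bbPhi_eq _ _ _ (by positivity) (by positivity)]
    push_cast
    rfl
  rw [this, hmain, mul_div_cancel_left₀ _ hpi, mul_div_assoc, Complex.ofReal_mul]
  norm_num
end
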